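/- Let n ≥ 2, λ > 0, L > 2λ, let g = 4π ∑_{j=1}^{k₁} m_j δ_{p_j}, h = 4π ∑_{j=1}^{k₂} n_j δ_{q_j} with m_j, n_j ∈ ℕ, and let Ω ⊂ ℤⁿ be a connected finite subset containing all the points p_j and q_j. Let (u_k, v_k) be the iterative sequence with u₀ = v₀ = 0, (Δ − L)u_k = λ e^{v_{k−1}} (e^{u_{k−1}} − 1) + g − L u_{k−1} in Ω, (Δ − L)v_k = λ e^{u_{k−1}} (e^{v_{k−1}} − 1) + h − L v_{k−1} in Ω, u_k = v_k = 0 on δΩ, and let (u_Ω, v_Ω) be its pointwise limit. Suppose W, V : Ω̄ → ℝ satisfy ΔW ≥ λ e^V (e^W − 1) + g in Ω, ΔV ≥ λ e^W (e^V − 1) + h in Ω, and W ≤ 0, V ≤ 0 on δΩ. Then for every k, W ≤ u_k and V ≤ v_k on Ω̄; in particular W ≤ u_Ω and V ≤ v_Ω. -/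

import Mathlib

/-!
The proof rests on a maximum principle on the finite set `Ω` (`le_zero_of_lapl_pos`): a function
that is `≤ 0` on `δΩ` and has strictly positive Laplacian wherever it is positive in `Ω` must be
`≤ 0` on `Ω̄`, because the Laplacian is nonpositive at a maximum point. It yields `W, V ≤ 0`
directly, since `λ e^V (e^W - 1) + g > 0` where `W > 0`. This is the comparison for `k = 0`.

For the induction put `F(a, b) = λ e^b (e^a - 1) - L a`. For `a, b ≤ 0` and `L > λ` it is
nonincreasing in both arguments (`reaction_antitone`). Hence if `W ≤ u_k ≤ 0` and `V ≤ v_k ≤ 0`, then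
`(Δ - L)(W - u_{k+1}) ≥ F(W, V) - F(u_k, v_k) ≥ 0` and
`(Δ - L) u_{k+1} = F(u_k, v_k) + g ≥ F(0, 0) = 0`, so the maximum principle gives
`W ≤ u_{k+1} ≤ 0`; the second component is symmetric. The sign `u_k, v_k ≤ 0` is carried along in
the induction because the monotonicity of `F` needs it.
-/

open Filter Real

noncomputable section

namespace CS

abbrev Lat (n : ℕ) := Fin n → ℤ

/-- d(x) = ∑ᵢ |xᵢ|, the graph distance to the origin on ℤⁿ. -/
def latDist {n : ℕ} (x : Lat n) : ℕ := ∑ i, (x i).natAbs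

/-- x ~ y iff ∑ᵢ |xᵢ − yᵢ| = 1. -/
def adjacent {n : ℕ} (x y : Lat n) : Prop := (∑ i, (x i - y i).natAbs) = 1

instance {n : ℕ} (x y : Lat n) : Decidable (adjacent x y) :=
  decidable_of_iff ((∑ i, (x i - y i).natAbs) = 1) Iff.rfl

def unitVec {n : ℕ} (i : Fin n) : Lat n := fun j => if j = i then 1 else 0

/-- The graph Laplacian Δu(x) = ∑_{y ~ x} (u(y) − u(x)) on ℤⁿ. -/
def lapl {n : ℕ} (u : Lat n → ℝ) (x : Lat n) : ℝ :=
  ∑ i, (u (x + unitVec i) + u (x - unitVec i) - 2 * u x)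

/-- The filter of neighborhoods of infinity (d(x) → +∞) on ℤⁿ. -/
def atInfty (n : ℕ) : Filter (Lat n) := Filter.comap latDist Filter.atTop

/-- The Dirac mass at p. -/
def dirac {n : ℕ} (p x : Lat n) : ℝ := if x = p then 1 else 0

/-- (u,v) is a topological solution of Δu = λ eᵛ(eᵘ−1) + g, Δv = λ eᵘ(eᵛ−1) + h
with u, v → 0 at infinity. -/
def IsTopSol {n : ℕ} (lam : ℝ) (g h u v : Lat n → ℝ) : Prop :=
  (∀ x, lapl u x = lam * Real.exp (v x) * (Real.exp (u x) - 1) + g x) ∧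
  (∀ x, lapl v x = lam * Real.exp (u x) * (Real.exp (v x) - 1) + h x) ∧
  Filter.Tendsto u (atInfty n) (nhds 0) ∧
  Filter.Tendsto v (atInfty n) (nhds 0)

/-- The boundary δΩ = {y ∉ Ω : ∃ x ∈ Ω, x ~ y}. -/
def bdry {n : ℕ} (Ω : Set (Lat n)) : Set (Lat n) := {y | y ∉ Ω ∧ ∃ x ∈ Ω, adjacent x y}

/-- Ω is connected: any two of its vertices are joined by a path of adjacent
vertices lying in Ω. -/
def PathConnectedIn {n : ℕ} (Ω : Set (Lat n)) : Prop :=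
  ∀ x ∈ Ω, ∀ y ∈ Ω, ∃ (k : ℕ) (c : ℕ → Lat n),
    c 0 = x ∧ c k = y ∧ (∀ i ≤ k, c i ∈ Ω) ∧ ∀ i < k, adjacent (c i) (c (i + 1))

/-- The iterative scheme: u₀ = v₀ = 0 and, for k ≥ 1,
(Δ − L)u_k = λ e^{v_{k−1}} (e^{u_{k−1}} − 1) + g − L u_{k−1} in Ω,
(Δ − L)v_k = λ e^{u_{k−1}} (e^{v_{k−1}} − 1) + h − L v_{k−1} in Ω,
with u_k = v_k = 0 off Ω (in particular on δΩ). -/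
def IterSeq {n : ℕ} (Ω : Set (Lat n)) (L lam : ℝ) (g h : Lat n → ℝ)
    (u v : ℕ → Lat n → ℝ) : Prop :=
  (∀ x, u 0 x = 0) ∧ (∀ x, v 0 x = 0) ∧
  (∀ k : ℕ, ∀ x ∈ Ω,
      lapl (u (k + 1)) x - L * u (k + 1) x
        = lam * Real.exp (v k x) * (Real.exp (u k x) - 1) + g x - L * u k x) ∧
  (∀ k : ℕ, ∀ x ∈ Ω,
      lapl (v (k + 1)) x - L * v (k + 1) x
        = lam * Real.exp (u k x) * (Real.exp (v k x) - 1) + h x - L * v k x) ∧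
  (∀ k : ℕ, ∀ x, x ∉ Ω → u (k + 1) x = 0) ∧
  (∀ k : ℕ, ∀ x, x ∉ Ω → v (k + 1) x = 0)

lemma adjacent_add_unitVec {n : ℕ} (x : Lat n) (i : Fin n) : adjacent x (x + unitVec i) := by
  simp [adjacent, unitVec, apply_ite Int.natAbs]

lemma adjacent_sub_unitVec {n : ℕ} (x : Lat n) (i : Fin n) : adjacent x (x - unitVec i) := by
  simp [adjacent, unitVec, apply_ite Int.natAbs]

lemma mem_closure_of_adjacent {n : ℕ} {Ω : Set (Lat n)} {x y : Lat n} (hx : x ∈ Ω)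
    (hxy : adjacent x y) : y ∈ Ω ∪ bdry Ω := by
  by_cases hy : y ∈ Ω
  · exact Or.inl hy
  · exact Or.inr ⟨hy, x, hx, hxy⟩

lemma lapl_sub {n : ℕ} (a b : Lat n → ℝ) (x : Lat n) :
    lapl (fun y => a y - b y) x = lapl a x - lapl b x := by
  simp only [lapl, ← Finset.sum_sub_distrib]
  exact Finset.sum_congr rfl fun i _ => by ring

/-- Maximum principle: the positivity of the Laplacian is only required where `w` is positive. -/
lemma le_zero_of_lapl_pos {n : ℕ} {Ω : Set (Lat n)} (hfin : Ω.Finite) (w : Lat n → ℝ)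
    (hw : ∀ x ∈ Ω, 0 < w x → 0 < lapl w x) (hb : ∀ x ∈ bdry Ω, w x ≤ 0) :
    ∀ x ∈ Ω ∪ bdry Ω, w x ≤ 0 := by
  have hΩ : ∀ x ∈ Ω, w x ≤ 0 := by
    intro x hx
    obtain ⟨z, hz, hmax⟩ := Set.exists_max_image Ω w hfin ⟨x, hx⟩
    by_contra! hpos
    have hzpos : 0 < w z := hpos.trans_le (hmax x hx)
    have hnbr : ∀ y, adjacent z y → w y ≤ w z := by
      intro y hy
      rcases mem_closure_of_adjacent hz hy with h | h
      · exact hmax y h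
      · exact (hb y h).trans hzpos.le
    have hle : lapl w z ≤ 0 := Finset.sum_nonpos fun i _ => by
      linarith [hnbr _ (adjacent_add_unitVec z i), hnbr _ (adjacent_sub_unitVec z i)]
    linarith [hw z hz hzpos]
  rintro x (hx | hx)
  · exact hΩ x hx
  · exact hb x hx

/-- The nonlinearity `F(a, b) = lam * e^b * (e^a - 1) - L * a` of the scheme is nonincreasing in
both arguments on the quadrant `a, b ≤ 0`. -/
lemma reaction_antitone {lam L a a' b b' : ℝ} (hlam : 0 < lam) (hL : lam ≤ L)
    (ha : a ≤ a') (ha' : a' ≤ 0) (hb : b ≤ b') (hb' : b' ≤ 0) :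
    lam * exp b' * (exp a' - 1) - L * a' ≤ lam * exp b * (exp a - 1) - L * a := by
  have h1 : exp b ≤ exp b' := exp_le_exp.2 hb
  have h2 : exp b' ≤ 1 := exp_le_one_iff.2 hb'
  have h3 : exp a ≤ 1 := exp_le_one_iff.2 (ha.trans ha')
  have h4 : exp a' ≤ 1 := exp_le_one_iff.2 ha'
  have h5 : exp a ≤ exp a' := exp_le_exp.2 ha
  -- `exp` is 1-Lipschitz on the nonpositive half-line
  have h6 : exp a' - exp a ≤ a' - a := by
    have e : exp a = exp a' * exp (a - a') := by rw [← exp_add]; ring_nf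
    have := add_one_le_exp (a - a')
    nlinarith [exp_pos a']
  have h7 : exp b' * (exp a - 1) ≤ exp b * (exp a - 1) := by nlinarith
  have h8 : exp b' * (exp a' - exp a) ≤ a' - a := by nlinarith [exp_pos b']
  have h9 : exp b' * (exp a' - 1) - exp b * (exp a - 1) ≤ a' - a := by linarith
  nlinarith

/-- A subsolution of `Δw = lam * e^z * (e^w - 1) + f` with `f ≥ 0` and nonpositive boundary values
is nonpositive. -/
lemma subsolution_nonpos {n : ℕ} {Ω : Set (Lat n)} (hfin : Ω.Finite) {lam : ℝ} (hlam : 0 < lam)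
    {f w z : Lat n → ℝ} (hf : ∀ x, 0 ≤ f x)
    (hw : ∀ x ∈ Ω, lam * exp (z x) * (exp (w x) - 1) + f x ≤ lapl w x)
    (hb : ∀ x ∈ bdry Ω, w x ≤ 0) : ∀ x ∈ Ω ∪ bdry Ω, w x ≤ 0 := by
  refine le_zero_of_lapl_pos hfin w (fun x hx hpos => ?_) hb
  have h1 : 0 < exp (w x) - 1 := sub_pos.2 (one_lt_exp_iff.2 hpos)
  have h2 : 0 < lam * exp (z x) * (exp (w x) - 1) := by positivity
  linarith [hw x hx, hf x]

/-- One step of the scheme for one component: `s` is the new iterate computed from the old pair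
`(a, b)`, and `(w, z)` lies below that pair. -/
lemma step_bounds {n : ℕ} {Ω : Set (Lat n)} (hfin : Ω.Finite) {lam L : ℝ} (hlam : 0 < lam)
    (hL : lam ≤ L) {f a b s w z : Lat n → ℝ} (hf : ∀ x, 0 ≤ f x)
    (hs : ∀ x ∈ Ω, lapl s x - L * s x = lam * exp (b x) * (exp (a x) - 1) + f x - L * a x)
    (hs0 : ∀ x, x ∉ Ω → s x = 0)
    (hw : ∀ x ∈ Ω, lam * exp (z x) * (exp (w x) - 1) + f x ≤ lapl w x)
    (hwb : ∀ x ∈ bdry Ω, w x ≤ 0)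
    (ha : ∀ x ∈ Ω ∪ bdry Ω, w x ≤ a x ∧ a x ≤ 0)
    (hb : ∀ x ∈ Ω ∪ bdry Ω, z x ≤ b x ∧ b x ≤ 0) :
    ∀ x ∈ Ω ∪ bdry Ω, w x ≤ s x ∧ s x ≤ 0 := by
  have hLpos : 0 < L := hlam.trans_le hL
  have hle : ∀ x ∈ Ω ∪ bdry Ω, w x - s x ≤ 0 := by
    refine le_zero_of_lapl_pos hfin (fun x => w x - s x) (fun x hx hpos => ?_) (fun x hx => ?_)
    · have hA := ha x (Or.inl hx)
      have hB := hb x (Or.inl hx)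
      have := reaction_antitone hlam hL hA.1 hA.2 hB.1 hB.2
      rw [lapl_sub]
      have hp := mul_pos hLpos hpos
      linarith [hs x hx, hw x hx]
    · have := hwb x hx
      rw [hs0 x hx.1]
      linarith
  have hneg : ∀ x ∈ Ω ∪ bdry Ω, s x ≤ 0 := by
    refine le_zero_of_lapl_pos hfin s (fun x hx hpos => ?_) (fun x hx => (hs0 x hx.1).le)
    have := reaction_antitone hlam hL (ha x (Or.inl hx)).2 le_rfl (hb x (Or.inl hx)).2 le_rfl
    simp only [exp_zero, sub_self, mul_zero] at this
    linarith [hs x hx, hf x, mul_pos hLpos hpos]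
  exact fun x hx => ⟨sub_nonpos.1 (hle x hx), hneg x hx⟩

lemma source_nonneg {n k : ℕ} (m : Fin k → ℕ) (p : Fin k → Lat n) (x : Lat n) :
    0 ≤ 4 * Real.pi * ∑ j, (m j : ℝ) * dirac (p j) x := by
  have : ∀ j, 0 ≤ (m j : ℝ) * dirac (p j) x := fun j => by
    unfold dirac
    split_ifs <;> simp
  exact mul_nonneg (by positivity) (Finset.sum_nonneg fun j _ => this j)

/-- comparison with sub-solutions: if ΔW ≥ λe^V(e^W − 1) + g and
ΔV ≥ λe^W(e^V − 1) + h in Ω with W, V ≤ 0 on δΩ, then W ≤ u_k and V ≤ v_k on Ω̄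
for every k; in particular W ≤ u_Ω and V ≤ v_Ω for the pointwise limits. -/
theorem iterative_scheme_comparison
    {n : ℕ} (hn : 2 ≤ n) (lam L : ℝ) (hlam : 0 < lam) (hL : 2 * lam < L)
    {k₁ k₂ : ℕ} (m : Fin k₁ → ℕ) (nn : Fin k₂ → ℕ)
    (p : Fin k₁ → Lat n) (q : Fin k₂ → Lat n)
    (g h : Lat n → ℝ)
    (hg : g = fun x => 4 * Real.pi * ∑ j, (m j : ℝ) * dirac (p j) x)
    (hh : h = fun x => 4 * Real.pi * ∑ j, (nn j : ℝ) * dirac (q j) x)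
    (Ω : Set (Lat n)) (hfin : Ω.Finite) (hconn : PathConnectedIn Ω)
    (hp : ∀ j, p j ∈ Ω) (hq : ∀ j, q j ∈ Ω)
    (u v : ℕ → Lat n → ℝ) (hiter : IterSeq Ω L lam g h u v)
    (W V : Lat n → ℝ)
    (hW : ∀ x ∈ Ω, lam * Real.exp (V x) * (Real.exp (W x) - 1) + g x ≤ lapl W x)
    (hV : ∀ x ∈ Ω, lam * Real.exp (W x) * (Real.exp (V x) - 1) + h x ≤ lapl V x)
    (hWb : ∀ x ∈ bdry Ω, W x ≤ 0) (hVb : ∀ x ∈ bdry Ω, V x ≤ 0) :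
    (∀ k : ℕ, ∀ x ∈ Ω ∪ bdry Ω, W x ≤ u k x ∧ V x ≤ v k x) ∧
    (∀ uΩ vΩ : Lat n → ℝ,
      (∀ x, Filter.Tendsto (fun k => u k x) Filter.atTop (nhds (uΩ x))) →
      (∀ x, Filter.Tendsto (fun k => v k x) Filter.atTop (nhds (vΩ x))) →
      ∀ x ∈ Ω ∪ bdry Ω, W x ≤ uΩ x ∧ V x ≤ vΩ x) := by
  obtain ⟨hu0, hv0, hu, hv, hub, hvb⟩ := hiter
  have hgn : ∀ x, 0 ≤ g x := fun x => by rw [hg]; exact source_nonneg m p x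
  have hhn : ∀ x, 0 ≤ h x := fun x => by rw [hh]; exact source_nonneg nn q x
  have hL' : lam ≤ L := by linarith
  have key : ∀ k : ℕ, (∀ x ∈ Ω ∪ bdry Ω, W x ≤ u k x ∧ u k x ≤ 0) ∧
      (∀ x ∈ Ω ∪ bdry Ω, V x ≤ v k x ∧ v k x ≤ 0) := by
    intro k
    induction k with
    | zero =>
      simp only [hu0, hv0, le_refl, and_true]
      exact ⟨subsolution_nonpos hfin hlam hgn hW hWb, subsolution_nonpos hfin hlam hhn hV hVb⟩
    | succ k ih =>
      exact ⟨step_bounds hfin hlam hL' hgn (hu k) (hub k) hW hWb ih.1 ih.2,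
        step_bounds hfin hlam hL' hhn (hv k) (hvb k) hV hVb ih.2 ih.1⟩
  refine ⟨fun k x hx => ⟨((key k).1 x hx).1, ((key k).2 x hx).1⟩, fun uΩ vΩ hul hvl x hx => ?_⟩
  exact ⟨ge_of_tendsto' (hul x) fun k => ((key k).1 x hx).1,
    ge_of_tendsto' (hvl x) fun k => ((key k).2 x hx).1⟩

end CS
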